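/- arXiv:1903.09357 — 2 statements merged into one kernel-verified Lean document; each statement's English description precedes it below -/
import Mathlib

section
/- Assume the faithfulness condition (F). Then every point of the shell Z_A lies in the T^ℓ-orbit of a point of φ(Z_B): for every u ∈ Z_A there exist t ∈ T^ℓ and z ∈ Z_B with t·u = φ(z). Consequently, the map [z] ↦ [φ(z)] is a well-defined homeomorphism from the orbit space Z_B/T^1 (with the quotient topology) onto the orbit space Z_A/T^ℓ (with the quotient topology). -/
open Complex

/-- Points of `ℂ^{ℓ+k}`. -/
abbrev PtA (ℓ k : ℕ) := (Fin ℓ → ℂ) × (Fin k → ℂ)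

/-- Points of `ℂ^{k+1}`. -/
abbrev PtB (k : ℕ) := ℂ × (Fin k → ℂ)

/-- The `T^ℓ`-action on `ℂ^{ℓ+k}`: `(t·u)_i = t_i^{-a_i} u_i` for `i ≤ ℓ` and
`(t·u)_{ℓ+r} = (∏_i t_i^{c_r n_i}) u_{ℓ+r}` for `r ≤ k`. -/
noncomputable def actA (ℓ k : ℕ) (a n : Fin ℓ → ℕ) (c : Fin k → ℕ)
    (t : Fin ℓ → ℂ) (u : PtA ℓ k) : PtA ℓ k :=
  (fun i => t i ^ (-(a i : ℤ)) * u.1 i,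
   fun r => (∏ i, t i ^ (c r * n i)) * u.2 r)

/-- The `T¹`-action on `ℂ^{k+1}`: `(t·z)_1 = t^{-α} z_1`, `(t·z)_{1+r} = t^{c_r β} z_{1+r}`. -/
noncomputable def actB (k : ℕ) (α β : ℕ) (c : Fin k → ℕ) (t : ℂ) (z : PtB k) : PtB k :=
  (t ^ (-(α : ℤ)) * z.1, fun r => t ^ (c r * β) * z.2 r)

/-- The shell `Z_A ⊆ ℂ^{ℓ+k}`. -/
def shellA (ℓ k : ℕ) (a n : Fin ℓ → ℕ) (c : Fin k → ℕ) : Set (PtA ℓ k) :=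
  {u | ∀ i, -(a i : ℝ) * normSq (u.1 i)
      + (n i : ℝ) * ∑ r, (c r : ℝ) * normSq (u.2 r) = 0}

/-- The shell `Z_B ⊆ ℂ^{k+1}`. -/
def shellB (k : ℕ) (α β : ℕ) (c : Fin k → ℕ) : Set (PtB k) :=
  {z | -(α : ℝ) * normSq z.1 + (β : ℝ) * ∑ r, (c r : ℝ) * normSq (z.2 r) = 0}

/-- The embedding `φ : ℂ^{k+1} → ℂ^{ℓ+k}`. -/
noncomputable def phiMap (ℓ k : ℕ) (m : Fin ℓ → ℕ) (β : ℕ) (z : PtB k) : PtA ℓ k :=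
  (fun i => (Real.sqrt ((m i : ℝ) / (β : ℝ)) : ℂ) * z.1, z.2)

/-- The orbit relation on the shell `Z_A` induced by the `T^ℓ`-action. -/
noncomputable def relA (ℓ k : ℕ) (a n : Fin ℓ → ℕ) (c : Fin k → ℕ)
    (x y : shellA ℓ k a n c) : Prop :=
  ∃ t : Fin ℓ → ℂ, (∀ i, ‖t i‖ = 1) ∧ actA ℓ k a n c t x.1 = y.1

/-- The orbit relation on the shell `Z_B` induced by the `T¹`-action. -/
noncomputable def relB (k : ℕ) (α β : ℕ) (c : Fin k → ℕ)
    (x y : shellB k α β c) : Prop :=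
  ∃ t : ℂ, ‖t‖ = 1 ∧ actB k α β c t x.1 = y.1

theorem aux_root (ℓ : ℕ) (hℓ : 1 ≤ ℓ) (a : Fin ℓ → ℕ)
    (hF1 : ∀ i j, i ≠ j → Nat.gcd (a i) (a j) = 1)
    (t : Fin ℓ → ℂ) (ht : ∀ i, ‖t i‖ = 1) (v : ℂ) (hv : ∀ i, t i ^ a i = v) :
    ∃ s : ℂ, ‖s‖ = 1 ∧ ∀ j, s ^ (∏ i ∈ Finset.univ \ {j}, a i) = t j := by
  have : Nonempty (Fin ℓ) := ⟨⟨0, hℓ⟩⟩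
  have h0 : ∀ i, t i ≠ 0 := fun i h => by simpa [h] using ht i
  obtain ⟨e, he⟩ := (exists_sum_eq_one_iff_pairwise_coprime (R := ℤ) (t := (Finset.univ : Finset (Fin ℓ)))
    (s := fun i => (a i : ℤ)) Finset.univ_nonempty).2 (by
      intro i j hij
      have : (i : Fin ℓ) ≠ j := fun h => hij (Subtype.ext h)
      exact Nat.isCoprime_iff_coprime.2 (hF1 _ _ this))
  refine ⟨∏ i, t i ^ e i, by simp [norm_prod, ht], fun j => ?_⟩
  have key : ∀ i, t i ^ (∏ x ∈ Finset.univ \ {j}, a x) = t j ^ (∏ x ∈ Finset.univ \ {i}, a x) := by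
    intro i
    by_cases hij : i = j
    · rw [hij]
    · have h1 : ∏ x ∈ Finset.univ \ {j}, a x = a i * ∏ x ∈ (Finset.univ \ {j}) \ {i}, a x := by
        rw [Finset.sdiff_singleton_eq_erase i]
        exact (Finset.mul_prod_erase _ _ (by simp [hij])).symm
      have h2 : ∏ x ∈ Finset.univ \ {i}, a x = a j * ∏ x ∈ (Finset.univ \ {j}) \ {i}, a x := by
        rw [sdiff_right_comm, Finset.sdiff_singleton_eq_erase j]
        exact (Finset.mul_prod_erase _ _ (by simp [Ne.symm hij])).symm
      rw [h1, h2, pow_mul, pow_mul, hv, hv]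
  rw [← Finset.prod_pow]
  have : ∀ i, (t i ^ e i) ^ (∏ x ∈ Finset.univ \ {j}, a x)
      = t j ^ (e i * ∏ x ∈ Finset.univ \ {i}, (a x : ℤ)) := by
    intro i
    rw [← zpow_natCast, ← zpow_mul, mul_comm, zpow_mul, zpow_natCast, key i, ← zpow_natCast,
      ← zpow_mul, mul_comm]
    push_cast
    rfl
  rw [Finset.prod_congr rfl (fun i _ => this i)]
  have hsum : ∀ S : Finset (Fin ℓ), ∏ i ∈ S, t j ^ (e i * ∏ x ∈ Finset.univ \ {i}, (a x : ℤ))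
      = t j ^ (∑ i ∈ S, e i * ∏ x ∈ Finset.univ \ {i}, (a x : ℤ)) := by
    intro S
    induction S using Finset.induction_on with
    | empty => simp
    | insert x S hx ih => rw [Finset.prod_insert hx, Finset.sum_insert hx, zpow_add₀ (h0 j), ih]
  rw [hsum, he, zpow_one]

theorem aux_lcm (ℓ : ℕ) (a : Fin ℓ → ℕ)
    (hF1 : ∀ i j, i ≠ j → Nat.gcd (a i) (a j) = 1) (i : Fin ℓ) :
    Finset.univ.lcm a = a i * ∏ x ∈ Finset.univ \ {i}, a x := by
  rw [Finset.sdiff_singleton_eq_erase, Finset.mul_prod_erase _ _ (Finset.mem_univ i)]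
  apply Nat.dvd_antisymm
  · exact Finset.lcm_dvd (fun b _ => Finset.dvd_prod_of_mem a (Finset.mem_univ b))
  · apply Finset.prod_dvd_of_isRelPrime
    · intro x _ y _ hxy
      exact Nat.coprime_iff_isRelPrime.1 (hF1 x y hxy)
    · intro x _
      exact Finset.dvd_lcm (Finset.mem_univ x)

theorem relA_equiv (ℓ k : ℕ) (a n : Fin ℓ → ℕ) (c : Fin k → ℕ) :
    Equivalence (relA ℓ k a n c) := by
  refine ⟨fun x => ⟨fun _ => 1, by simp, ?_⟩, ?_, ?_⟩
  · simp [actA]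
  · rintro x y ⟨t, ht, h⟩
    have h0 : ∀ i, t i ≠ 0 := fun i h => by simpa [h] using ht i
    refine ⟨fun i => (t i)⁻¹, by simp [ht], ?_⟩
    rw [← h]
    ext i
    · have := h0 i
      simp [actA, this]
    · have : ∏ x, t x ^ (c i * n x) ≠ 0 := Finset.prod_ne_zero_iff.2 fun j _ => pow_ne_zero _ (h0 j)
      simp [actA, this]
  · rintro x y z ⟨t, ht, h⟩ ⟨s, hs, h'⟩
    refine ⟨fun i => s i * t i, by simp [ht, hs], ?_⟩
    rw [← h', ← h]
    ext i
    · simp only [actA, mul_zpow]; ring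
    · simp only [actA, mul_pow, Finset.prod_mul_distrib]; ring

theorem aux_phase (u : ℂ) (d : ℕ) (hd : 0 < d) :
    ∃ t : ℂ, ‖t‖ = 1 ∧ t ^ (-(d : ℤ)) * u = (‖u‖ : ℂ) := by
  refine ⟨Complex.exp ((u.arg / d : ℝ) * I), Complex.norm_exp_ofReal_mul_I _, ?_⟩
  have hd' : (d : ℂ) ≠ 0 := by exact_mod_cast hd.ne'
  rw [zpow_neg, zpow_natCast, ← Complex.exp_nat_mul, ← Complex.exp_neg]
  conv_lhs => rw [← Complex.norm_mul_exp_arg_mul_I u]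
  rw [mul_left_comm, ← Complex.exp_add]
  have : -((d : ℂ) * (((u.arg / d : ℝ) : ℂ) * I)) + (u.arg : ℂ) * I = 0 := by
    push_cast
    field_simp
    ring
  simp only [Complex.norm_mul_exp_arg_mul_I]
  rw [this]; simp

theorem shellA_act (ℓ k : ℕ) (a n : Fin ℓ → ℕ) (c : Fin k → ℕ)
    (t : Fin ℓ → ℂ) (ht : ∀ i, ‖t i‖ = 1) (u : PtA ℓ k) (hu : u ∈ shellA ℓ k a n c) :
    actA ℓ k a n c t u ∈ shellA ℓ k a n c := by
  intro i
  have := hu i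
  simpa [actA, Complex.normSq_eq_norm_sq, ht, norm_prod] using this

theorem phi_mem (ℓ k : ℕ) (a n m : Fin ℓ → ℕ) (c : Fin k → ℕ) (α β : ℕ) (hβ : 0 < β)
    (hm : ∀ i, a i * m i = n i * α) (z : PtB k) :
    z ∈ shellB k α β c → phiMap ℓ k m β z ∈ shellA ℓ k a n c := by
  intro hz i
  have hz' : -(α : ℝ) * normSq z.1 + (β : ℝ) * ∑ r, (c r : ℝ) * normSq (z.2 r) = 0 := hz
  have hm' : (a i : ℝ) * m i = n i * α := by exact_mod_cast hm i
  have hβ' : (β : ℝ) ≠ 0 := by exact_mod_cast hβ.ne'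
  simp only [phiMap, Complex.normSq_mul, Complex.normSq_ofReal]
  rw [Real.mul_self_sqrt (by positivity)]
  generalize ∑ r, (c r : ℝ) * normSq (z.2 r) = S at *
  field_simp
  linear_combination (-(normSq z.1)) * hm' + n i * hz'

theorem phi_closed (ℓ k : ℕ) (m : Fin ℓ → ℕ) (β : ℕ) (hβ : 0 < β) (i : Fin ℓ) (hm : 0 < m i) :
    Topology.IsClosedEmbedding (phiMap ℓ k m β) := by
  have hs : (Real.sqrt ((m i : ℝ) / (β : ℝ)) : ℂ) ≠ 0 := by
    have : 0 < Real.sqrt ((m i : ℝ) / (β : ℝ)) := Real.sqrt_pos.2 (by positivity)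
    exact_mod_cast this.ne'
  refine Function.LeftInverse.isClosedEmbedding
    (f := fun u : PtA ℓ k => ((u.1 i / (Real.sqrt ((m i : ℝ) / (β : ℝ)) : ℂ), u.2) : PtB k)) ?_ ?_ ?_
  · intro z
    ext
    · exact mul_div_cancel_left₀ _ hs
    · simp [phiMap]
  · fun_prop
  · unfold phiMap; fun_prop

theorem shellB_closed (k : ℕ) (α β : ℕ) (c : Fin k → ℕ) : IsClosed (shellB k α β c) := by
  refine isClosed_eq ?_ continuous_const
  have := Complex.continuous_normSq
  fun_prop

theorem act_closed (ℓ k : ℕ) (a n : Fin ℓ → ℕ) (c : Fin k → ℕ) (D : Set (PtA ℓ k))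
    (hD : IsClosed D) :
    IsClosed {u | ∃ t : Fin ℓ → ℂ, (∀ i, ‖t i‖ = 1) ∧ actA ℓ k a n c t u ∈ D} := by
  have hcont : Continuous fun p : (Fin ℓ → Circle) × PtA ℓ k =>
      actA ℓ k a n c (fun i => (p.1 i : ℂ)) p.2 := by
    unfold actA
    refine Continuous.prodMk ?_ (by fun_prop)
    refine continuous_pi fun i => ?_
    refine Continuous.mul ?_ (by fun_prop)
    exact Continuous.zpow₀ (by fun_prop) _ (fun p => Or.inl (Circle.coe_ne_zero _))
  convert isClosedMap_snd_of_compactSpace _ (hD.preimage hcont) using 1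
  ext u
  constructor
  · rintro ⟨t, ht, h⟩
    exact ⟨(fun i => ⟨t i, mem_sphere_zero_iff_norm.2 (ht i)⟩, u), h, rfl⟩
  · rintro ⟨⟨t, u'⟩, h, rfl⟩
    exact ⟨fun i => t i, fun i => Circle.norm_coe _, h⟩

theorem phi_rel (ℓ k : ℕ) (a n m b : Fin ℓ → ℕ) (c : Fin k → ℕ) (α β : ℕ)
    (hb : ∀ i, α = a i * b i) (hm : ∀ i, m i = n i * b i) (hβ : β = ∑ i, m i)
    (s : ℂ) (z : PtB k) :
    actA ℓ k a n c (fun i => s ^ b i) (phiMap ℓ k m β z) = phiMap ℓ k m β (actB k α β c s z) := by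
  ext i
  · simp only [actA, phiMap, actB]
    have : (s ^ b i) ^ (-(a i : ℤ)) = s ^ (-(α : ℤ)) := by
      rw [zpow_neg, zpow_neg, zpow_natCast, zpow_natCast, ← pow_mul, hb i, mul_comm]
    rw [this]; ring
  · simp only [actA, phiMap, actB]
    have : ∏ x, (s ^ b x) ^ (c i * n x) = s ^ (c i * β) := by
      rw [hβ, Finset.mul_sum, ← Finset.prod_pow_eq_pow_sum]
      refine Finset.prod_congr rfl fun x _ => ?_
      rw [← pow_mul, hm]; congr 1; ring
    rw [this]

theorem phi_surj (ℓ k : ℕ) (a n m : Fin ℓ → ℕ) (c : Fin k → ℕ) (α β : ℕ)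
    (ha : ∀ i, 0 < a i) (hα : 0 < α) (hβ : 0 < β)
    (hm : ∀ i, a i * m i = n i * α) (u : PtA ℓ k) (hu : u ∈ shellA ℓ k a n c) :
    ∃ t : Fin ℓ → ℂ, (∀ i, ‖t i‖ = 1) ∧
          ∃ z ∈ shellB k α β c, actA ℓ k a n c t u = phiMap ℓ k m β z := by
  choose t ht h using fun i => aux_phase (u.1 i) (a i) (ha i)
  have hα' : (0 : ℝ) < α := by exact_mod_cast hα
  have hβ' : (0 : ℝ) < β := by exact_mod_cast hβ
  set S : ℝ := ∑ r, (c r : ℝ) * normSq (u.2 r) with hS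
  have hS0 : 0 ≤ S := Finset.sum_nonneg fun r _ => mul_nonneg (by positivity) (normSq_nonneg _)
  refine ⟨t, ht, ((Real.sqrt (S * β / α) : ℝ), (actA ℓ k a n c t u).2), ?_, ?_⟩
  · have h2 : ∑ r, (c r : ℝ) * normSq ((actA ℓ k a n c t u).2 r) = S := by
      simp [actA, Complex.normSq_eq_norm_sq, ht, norm_prod, hS]
    change -(α : ℝ) * normSq ((Real.sqrt (S * β / α) : ℝ) : ℂ) + (β : ℝ) * ∑ r, (c r : ℝ) * normSq ((actA ℓ k a n c t u).2 r) = 0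
    rw [h2, Complex.normSq_ofReal, Real.mul_self_sqrt (by positivity)]
    field_simp
    ring
  · refine Prod.ext ?_ rfl
    funext i
    simp only [actA, phiMap, h]
    rw [← Complex.ofReal_mul, ← Real.sqrt_mul (by positivity)]
    congr 1
    symm
    rw [Real.sqrt_eq_iff_mul_self_eq (by positivity) (norm_nonneg _)]
    have h1 : -(a i : ℝ) * normSq (u.1 i) + (n i : ℝ) * S = 0 := hu i
    rw [Complex.normSq_eq_norm_sq] at h1
    have ha' : (0 : ℝ) < a i := by exact_mod_cast ha i
    have hm' : (a i : ℝ) * m i = n i * α := by exact_mod_cast hm i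
    have : (a i : ℝ) * (‖u.1 i‖ * ‖u.1 i‖) = a i * ((m i : ℝ) / β * (S * β / α)) := by
      have e : (m i : ℝ) / β * (S * β / α) = m i * S / α := by field_simp
      rw [e, ← mul_div_assoc, eq_div_iff hα'.ne']
      linear_combination (-(α : ℝ)) * h1 - S * hm'
    exact (mul_left_cancel₀ ha'.ne' this).symm

theorem shellB_zero (k : ℕ) (α β : ℕ) (c : Fin k → ℕ) (hc : ∀ r, 0 < c r) (hβ : 0 < β)
    (z : PtB k) (hz : z ∈ shellB k α β c) (h : z.1 = 0) : z = 0 := by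
  have hz' : -(α : ℝ) * normSq z.1 + (β : ℝ) * ∑ r, (c r : ℝ) * normSq (z.2 r) = 0 := hz
  have hβ' : (β : ℝ) ≠ 0 := by exact_mod_cast hβ.ne'
  rw [h] at hz'
  simp only [map_zero, mul_zero, zero_add, mul_eq_zero, hβ', false_or] at hz'
  rw [Finset.sum_eq_zero_iff_of_nonneg
    (fun r _ => mul_nonneg (by positivity) (normSq_nonneg _))] at hz'
  refine Prod.ext h ?_
  funext r
  have := hz' r (Finset.mem_univ r)
  have hc' : (c r : ℝ) ≠ 0 := by exact_mod_cast (hc r).ne'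
  simpa [hc'] using this

theorem phi_inj (ℓ k : ℕ) (hℓ : 1 ≤ ℓ) (a n m b : Fin ℓ → ℕ) (c : Fin k → ℕ) (α β : ℕ)
    (hc : ∀ r, 0 < c r)
    (hF1 : ∀ i j, i ≠ j → Nat.gcd (a i) (a j) = 1)
    (hb' : b = fun i => ∏ x ∈ Finset.univ \ {i}, a x)
    (hb : ∀ i, α = a i * b i) (hm : ∀ i, m i = n i * b i) (hβ : β = ∑ i, m i)
    (hm0 : ∀ i, 0 < m i) (hβ0 : 0 < β)
    (z w : PtB k) (hz : z ∈ shellB k α β c) (hw : w ∈ shellB k α β c)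
    (t : Fin ℓ → ℂ) (ht : ∀ i, ‖t i‖ = 1)
    (h : actA ℓ k a n c t (phiMap ℓ k m β z) = phiMap ℓ k m β w) :
    ∃ s : ℂ, ‖s‖ = 1 ∧ actB k α β c s z = w := by
  have h0 : ∀ i, t i ≠ 0 := fun i h => by simpa [h] using ht i
  have h1 : ∀ i, t i ^ (-(a i : ℤ)) * z.1 = w.1 := by
    intro i
    have hs : (Real.sqrt ((m i : ℝ) / (β : ℝ)) : ℂ) ≠ 0 := by
      have := hm0 i
      have : 0 < Real.sqrt ((m i : ℝ) / (β : ℝ)) := Real.sqrt_pos.2 (by positivity)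
      exact_mod_cast this.ne'
    have := congrFun (congrArg Prod.fst h) i
    simp only [actA, phiMap] at this
    apply mul_left_cancel₀ hs
    rw [← this]; ring
  by_cases hz1 : z.1 = 0
  · have hw1 : w.1 = 0 := by rw [← h1 ⟨0, hℓ⟩, hz1, mul_zero]
    rw [shellB_zero k α β c hc hβ0 z hz hz1, shellB_zero k α β c hc hβ0 w hw hw1]
    refine ⟨1, by simp, ?_⟩
    simp [actB]
    rfl
  · obtain ⟨s, hs, hst⟩ := aux_root ℓ hℓ a hF1 t ht ((w.1 / z.1)⁻¹) (by
      intro i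
      rw [← h1 i, mul_div_cancel_right₀ _ hz1, zpow_neg, inv_inv, zpow_natCast])
    refine ⟨s, hs, ?_⟩
    have ht' : t = fun i => s ^ b i := by
      funext i; rw [hb']; exact (hst i).symm
    rw [ht', phi_rel ℓ k a n m b c α β hb hm hβ] at h
    exact (phi_closed ℓ k m β hβ0 ⟨0, hℓ⟩ (hm0 _)).injective h

/-- every point of `Z_A` lies in the `T^ℓ`-orbit of a point of `φ(Z_B)`;
consequently `[z] ↦ [φ(z)]` is a well-defined homeomorphism
`Z_B/T¹ → Z_A/T^ℓ` of the orbit spaces with their quotient topologies. -/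
theorem stmt7 (ℓ k : ℕ) (hℓ : 1 ≤ ℓ) (hk : 1 ≤ k)
    (a n : Fin ℓ → ℕ) (c : Fin k → ℕ)
    (ha : ∀ i, 0 < a i) (hn : ∀ i, 0 < n i) (hc : ∀ r, 0 < c r)
    (hF1 : ∀ i j, i ≠ j → Nat.gcd (a i) (a j) = 1)
    (hF2 : ∀ i, ∃ r, Nat.gcd (a i) (c r * n i) = 1) :
    let α : ℕ := Finset.univ.lcm a
    let m : Fin ℓ → ℕ := fun i => n i * α / a i
    let β : ℕ := ∑ i, m i
    (∀ u ∈ shellA ℓ k a n c,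
        ∃ t : Fin ℓ → ℂ, (∀ i, ‖t i‖ = 1) ∧
          ∃ z ∈ shellB k α β c, actA ℓ k a n c t u = phiMap ℓ k m β z)
    ∧
    (∃ F : Quot (relB k α β c) ≃ₜ Quot (relA ℓ k a n c),
        ∀ (z : shellB k α β c) (u : shellA ℓ k a n c),
          phiMap ℓ k m β z.1 = u.1 →
          F (Quot.mk (relB k α β c) z) = Quot.mk (relA ℓ k a n c) u) := by
  intro α m β
  set b : Fin ℓ → ℕ := fun i => ∏ x ∈ Finset.univ \ {i}, a x with hb'
  have hb : ∀ i, α = a i * b i := fun i => aux_lcm ℓ a hF1 i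
  have hb0 : ∀ i, 0 < b i := fun i => Finset.prod_pos fun j _ => ha j
  have hm : ∀ i, m i = n i * b i := by
    intro i
    change n i * α / a i = _
    rw [hb i, mul_left_comm, Nat.mul_div_cancel_left _ (ha i)]
  have hm0 : ∀ i, 0 < m i := fun i => by rw [hm]; exact Nat.mul_pos (hn i) (hb0 i)
  let i0 : Fin ℓ := ⟨0, hℓ⟩
  have hβ0 : 0 < β := Finset.sum_pos (fun i _ => hm0 i) ⟨i0, Finset.mem_univ _⟩
  have hα0 : 0 < α := by rw [hb i0]; exact Nat.mul_pos (ha _) (hb0 _)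
  have ham : ∀ i, a i * m i = n i * α := fun i => by rw [hm, hb i]; ring
  have hβ : β = ∑ i, m i := rfl
  clear_value β m α
  have hsurj := phi_surj ℓ k a n m c α β ha hα0 hβ0 ham
  refine ⟨hsurj, ?_⟩
  have hcl := phi_closed ℓ k m β hβ0 i0 (hm0 i0)
  let Φ : shellB k α β c → shellA ℓ k a n c :=
    fun z => ⟨phiMap ℓ k m β z.1, phi_mem ℓ k a n m c α β hβ0 ham z.1 z.2⟩
  have hΦ : Continuous Φ := (hcl.continuous.comp continuous_subtype_val).subtype_mk _
  let G : Quot (relB k α β c) → Quot (relA ℓ k a n c) :=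
    Quot.lift (fun z => Quot.mk _ (Φ z)) (by
      rintro x y ⟨s, hs, h⟩
      refine Quot.sound ⟨fun i => s ^ b i, by simp [hs], ?_⟩
      change actA ℓ k a n c _ (phiMap ℓ k m β x.1) = phiMap ℓ k m β y.1
      rw [phi_rel ℓ k a n m b c α β hb hm hβ, h])
  have hexact : ∀ x y, Quot.mk (relA ℓ k a n c) x = Quot.mk (relA ℓ k a n c) y →
      relA ℓ k a n c x y := fun x y h =>
    (relA_equiv ℓ k a n c).eqvGen_iff.1 (Quot.eqvGen_exact h)
  have hGc : Continuous G := continuous_quot_lift _ (continuous_quot_mk.comp hΦ)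
  have hGi : Function.Injective G := by
    rintro ⟨x⟩ ⟨y⟩ h
    obtain ⟨t, ht, h⟩ := hexact _ _ h
    exact Quot.sound (phi_inj ℓ k hℓ a n m b c α β hc hF1 hb' hb hm hβ hm0 hβ0 x.1 y.1 x.2 y.2 t ht h)
  have hGs : Function.Surjective G := by
    rintro ⟨u⟩
    obtain ⟨t, ht, z, hz, h⟩ := hsurj u.1 u.2
    refine ⟨Quot.mk _ ⟨z, hz⟩, ?_⟩
    exact (Quot.sound ⟨t, ht, h⟩).symm
  have hGcl : IsClosedMap G := by
    intro C hC
    have hC' : IsClosed (Quot.mk (relB k α β c) ⁻¹' C) := hC.preimage continuous_quot_mk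
    have hC2 := (shellB_closed k α β c).isClosedEmbedding_subtypeVal.isClosedMap _ hC'
    have hC3 := act_closed ℓ k a n c _ (hcl.isClosedMap _ hC2)
    have hC4 := hC3.preimage (continuous_subtype_val (p := fun u => u ∈ shellA ℓ k a n c))
    rw [← isQuotientMap_quot_mk.isClosed_preimage]
    convert hC4 using 1
    ext u
    constructor
    · rintro ⟨⟨z⟩, hz, h⟩
      obtain ⟨t, ht, h⟩ := hexact _ _ h.symm
      exact ⟨t, ht, z.1, ⟨z, hz, rfl⟩, h.symm⟩
    · rintro ⟨t, ht, _, ⟨z, hz, rfl⟩, h⟩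
      exact ⟨Quot.mk _ z, hz, (Quot.sound ⟨t, ht, h.symm⟩).symm⟩
  refine ⟨(Equiv.ofBijective G ⟨hGi, hGs⟩).toHomeomorphOfContinuousClosed hGc hGcl, ?_⟩
  intro z u h
  change Quot.mk (relA ℓ k a n c) (Φ z) = _
  congr 1
  exact Subtype.ext h
end

section
/- Let k ≥ 2 and k′ ≥ 1, and let α, β, α′, β′ be positive integers with gcd(α, β) = 1 and gcd(α′, β′) = 1. Consider P = ℂ[z_1,…,z_{k+1}, w_1,…,w_{k+1}] with the ℂ^×-action of weight row A = (−α, β, …, β) (k copies of β) and P′ = ℂ[z′_1,…,z′_{k′+1}, w′_1,…,w′_{k′+1}] with the ℂ^×-action of weight row B = (−α′, β′, …, β′) (k′ copies of β′). If the graded ℂ-algebras P^{inv}/(J_A) and (P′)^{inv}/(J_B) — the invariant subalgebras modulo the ideals generated by the moment polynomials J_A = −α z_1 w_1 + β Σ_{j=1}^k z_{1+j} w_{1+j} and J_B = −α′ z′_1 w′_1 + β′ Σ_{j=1}^{k′} z′_{1+j} w′_{1+j} — are isomorphic as graded ℂ-algebras, then k = k′, α = α′, and β = β′. -/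
open Complex MvPolynomial

/-- The polynomial ring `P = ℂ[z, w]` with `z, w` each indexed by `Unit ⊕ Fin k`
(`Sum.inl ()` is the first coordinate `z_1` resp. `w_1`), so `P` has `2(k+1)` variables. -/
abbrev PB (k : ℕ) := MvPolynomial ((Unit ⊕ Fin k) ⊕ (Unit ⊕ Fin k)) ℂ

/-- The substitution action of `t ∈ ℂ^×` on `P` for the weight row `(-α, β, …, β)`:
`z_1 ↦ t^{-α} z_1`, `w_1 ↦ t^{α} w_1`, `z_{1+j} ↦ t^{β} z_{1+j}`, `w_{1+j} ↦ t^{-β} w_{1+j}`. -/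
noncomputable def actPB (k : ℕ) (α β : ℕ) (t : ℂ) : PB k →ₐ[ℂ] PB k :=
  aeval fun x => match x with
    | Sum.inl (Sum.inl _) => C (t ^ (-(α : ℤ))) * X (Sum.inl (Sum.inl ()))
    | Sum.inl (Sum.inr j) => C (t ^ (β : ℤ)) * X (Sum.inl (Sum.inr j))
    | Sum.inr (Sum.inl _) => C (t ^ (α : ℤ)) * X (Sum.inr (Sum.inl ()))
    | Sum.inr (Sum.inr j) => C (t ^ (-(β : ℤ))) * X (Sum.inr (Sum.inr j))

/-- The subalgebra of `ℂ^×`-invariant polynomials. -/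
noncomputable def invPB (k : ℕ) (α β : ℕ) : Subalgebra ℂ (PB k) where
  carrier := {f | ∀ t : ℂ, t ≠ 0 → actPB k α β t f = f}
  mul_mem' hf hg t ht := by rw [map_mul, hf t ht, hg t ht]
  add_mem' hf hg t ht := by rw [map_add, hf t ht, hg t ht]
  one_mem' t ht := map_one _
  zero_mem' t ht := map_zero _
  algebraMap_mem' r t ht := (actPB k α β t).commutes r

/-- The moment polynomial `J = -α z_1 w_1 + β Σ_j z_{1+j} w_{1+j}`. -/
noncomputable def JB (k : ℕ) (α β : ℕ) : PB k :=
  -(C ((α : ℂ)) * X (Sum.inl (Sum.inl ())) * X (Sum.inr (Sum.inl ())))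
    + C ((β : ℂ)) * ∑ j, X (Sum.inl (Sum.inr j)) * X (Sum.inr (Sum.inr j))

/-- The ideal of the invariant subalgebra generated by the moment polynomial. -/
noncomputable def idealB (k : ℕ) (α β : ℕ) : Ideal (invPB k α β) :=
  Ideal.span {f : invPB k α β | (f : PB k) = JB k α β}


abbrev SgB (k : ℕ) := (Unit ⊕ Fin k) ⊕ (Unit ⊕ Fin k)

def wB (k α β : ℕ) : SgB k → ℤ
  | Sum.inl (Sum.inl _) => -(α : ℤ)
  | Sum.inl (Sum.inr _) => (β : ℤ)
  | Sum.inr (Sum.inl _) => (α : ℤ)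
  | Sum.inr (Sum.inr _) => -(β : ℤ)

lemma act_eqB (k α β : ℕ) (t : ℂ) :
    actPB k α β t = aeval (fun x => C (t ^ wB k α β x) * X x) := by
  unfold actPB
  congr 1
  funext x
  rcases x with (x | x) | (x | x) <;> rfl

lemma act_monB (k α β : ℕ) (t : ℂ) (ht : t ≠ 0) (d : SgB k →₀ ℕ) (c : ℂ) :
    actPB k α β t (monomial d c) = monomial d (t ^ (∑ x, (d x : ℤ) * wB k α β x) * c) := by
  rw [act_eqB, aeval_monomial, Finsupp.prod_fintype _ _ (by simp)]
  simp only [mul_pow, Finset.prod_mul_distrib]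
  rw [monomial_eq, Finsupp.prod_fintype _ _ (by simp)]
  rw [← mul_assoc]
  congr 1
  rw [algebraMap_eq, mul_comm, C_mul]
  congr 1
  simp only [← map_pow, ← map_prod]
  congr 1
  have : ∀ s : Finset (SgB k), ∏ x ∈ s, (t ^ wB k α β x) ^ d x = t ^ (∑ x ∈ s, (d x : ℤ) * wB k α β x) := by
    classical
    intro s
    induction s using Finset.induction_on with
    | empty => simp
    | insert a s ha ih =>
      rw [Finset.prod_insert ha, Finset.sum_insert ha, ih, zpow_add₀ ht, mul_comm (d a : ℤ), zpow_mul,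
        zpow_natCast]
  exact this _

lemma act_coeffB (k α β : ℕ) (t : ℂ) (ht : t ≠ 0) (f : PB k) (d : SgB k →₀ ℕ) :
    coeff d (actPB k α β t f) = t ^ (∑ x, (d x : ℤ) * wB k α β x) * coeff d f := by
  classical
  induction f using MvPolynomial.induction_on' with
  | monomial u a =>
    rw [act_monB k α β t ht, coeff_monomial, coeff_monomial]
    split_ifs with h
    · rw [h]
    · simp
  | add p q hp hq => rw [map_add, coeff_add, coeff_add, hp, hq, mul_add]

lemma mem_invB (k α β : ℕ) (f : PB k) :
    f ∈ invPB k α β ↔ ∀ d, coeff d f ≠ 0 → ∑ x, (d x : ℤ) * wB k α β x = 0 := by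
  constructor
  · intro h d hd
    have h2 := congrArg (coeff d) (h 2 two_ne_zero)
    rw [act_coeffB k α β 2 two_ne_zero] at h2
    have h3 : (2 : ℂ) ^ (∑ x, (d x : ℤ) * wB k α β x) = 1 := by
      apply mul_right_cancel₀ hd; rw [h2, one_mul]
    have h4 : (2 : ℝ) ^ (∑ x, (d x : ℤ) * wB k α β x) = 1 := by
      have := congrArg norm h3
      rwa [norm_zpow, norm_one, Complex.norm_two] at this
    exact (zpow_eq_one_iff_right₀ (by norm_num) (by norm_num)).1 h4
  · intro h t ht
    ext d
    rw [act_coeffB k α β t ht]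
    by_cases hd : coeff d f = 0
    · rw [hd, mul_zero]
    · rw [h d hd]; simp

lemma J_memB (k α β : ℕ) : JB k α β ∈ invPB k α β := by
  intro t ht
  have h1 : (C (t ^ (-(α:ℤ))) : PB k) * C (t ^ (α:ℤ)) = 1 := by
    rw [← C_mul, ← zpow_add₀ ht]; simp
  have h2 : (C (t ^ (β:ℤ)) : PB k) * C (t ^ (-(β:ℤ))) = 1 := by
    rw [← C_mul, ← zpow_add₀ ht]; simp
  unfold JB
  rw [act_eqB]
  simp only [map_add, map_neg, map_mul, map_sum, aeval_X, wB, aeval_C, algebraMap_eq]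
  generalize (C (t ^ (-(α:ℤ))) : PB k) = a1 at *
  generalize (C (t ^ ((α:ℤ))) : PB k) = a2 at *
  generalize (C (t ^ (-(β:ℤ))) : PB k) = b1 at *
  generalize (C (t ^ ((β:ℤ))) : PB k) = b2 at *
  have e1 : ∀ c x y : PB k, c * (a1 * x) * (a2 * y) = c * x * y := fun c x y => by
    rw [show c * (a1 * x) * (a2 * y) = (a1 * a2) * (c * x * y) by ring, h1, one_mul]
  have e2 : ∀ x y : PB k, (b2 * x) * (b1 * y) = x * y := fun x y => by
    rw [show (b2 * x) * (b1 * y) = (b2 * b1) * (x * y) by ring, h2, one_mul]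
  simp only [e1, e2]

lemma J_homB (k α β : ℕ) : (JB k α β).IsHomogeneous 2 := by
  have hX : ∀ a b : SgB k, (X a * X b : PB k).IsHomogeneous 2 := fun a b =>
    (isHomogeneous_X ℂ a).mul (isHomogeneous_X ℂ b)
  unfold JB
  refine IsHomogeneous.add (IsHomogeneous.neg ?_) ?_
  · rw [mul_assoc]
    exact (hX _ _).C_mul _
  · exact (IsHomogeneous.sum _ _ _ fun j _ => hX _ _).C_mul _

lemma J_neB (k α β : ℕ) (hα : 0 < α) : JB k α β ≠ 0 := by
  intro h
  have := congrArg (eval (fun x : SgB k => match x with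
    | Sum.inl (Sum.inl _) => (1:ℂ)
    | Sum.inl (Sum.inr _) => 0
    | Sum.inr (Sum.inl _) => 1
    | Sum.inr (Sum.inr _) => 0)) h
  simp [JB] at this
  omega

noncomputable def VB (k α β n : ℕ) : Submodule ℂ (invPB k α β) :=
  (homogeneousSubmodule (SgB k) ℂ n).comap (invPB k α β).val.toLinearMap

def SB (k α β n : ℕ) : Set (SgB k →₀ ℕ) :=
  {d | d.degree = n ∧ ∑ x, (d x : ℤ) * wB k α β x = 0}

lemma SB_finB (k α β n : ℕ) : (SB k α β n).Finite :=
  (Finsupp.finite_of_degree_eq n).subset fun _ h => h.1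

lemma VB_mapB (k α β n : ℕ) :
    (VB k α β n).map (invPB k α β).val.toLinearMap = restrictSupport ℂ (SB k α β n) := by
  ext f
  simp only [Submodule.mem_map, mem_restrictSupport_iff]
  constructor
  · rintro ⟨⟨g, hg⟩, h1, rfl⟩ d hd
    have hd' : coeff d g ≠ 0 := by simpa using hd
    refine ⟨?_, (mem_invB _ _ _ _).1 hg d hd'⟩
    have h2 : g.IsHomogeneous n := h1
    have := h2 hd'
    rw [Finsupp.degree_eq_weight_one]; exact this
  · intro h
    refine ⟨⟨f, (mem_invB _ _ _ _).2 fun d hd => (h (by simpa using hd)).2⟩, ?_, rfl⟩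
    change f.IsHomogeneous n
    intro d hd
    have := (h (a := d) (by simpa using hd)).1
    rw [Finsupp.degree_eq_weight_one] at this; exact this

noncomputable def VB_equivB (k α β n : ℕ) : VB k α β n ≃ₗ[ℂ] restrictSupport ℂ (SB k α β n) :=
  (Submodule.equivMapOfInjective (invPB k α β).val.toLinearMap
    (fun _ _ h => Subtype.ext h) (VB k α β n)).trans (LinearEquiv.ofEq _ _ (VB_mapB k α β n))

lemma VB_finrankB (k α β n : ℕ) : Module.finrank ℂ (VB k α β n) = (SB k α β n).ncard := by
  rw [(VB_equivB k α β n).finrank_eq, Module.finrank_eq_nat_card_basis (basisRestrictSupport ℂ _)]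
  rfl

instance VB_fdB (k α β n : ℕ) : FiniteDimensional ℂ (VB k α β n) := by
  have := (SB_finB k α β n).to_subtype
  have : FiniteDimensional ℂ (restrictSupport ℂ (SB k α β n)) :=
    Module.Finite.of_basis (basisRestrictSupport ℂ _)
  exact Module.Finite.equiv (VB_equivB k α β n).symm

lemma div_homB (k α β : ℕ) (hα : 0 < α) (n : ℕ) (g : PB k)
    (h : (JB k α β * g).IsHomogeneous (n + 2)) : g.IsHomogeneous n := by
  have key : homogeneousComponent (n+2) (JB k α β * g) = JB k α β * homogeneousComponent n g := by
    conv_lhs => rw [← sum_homogeneousComponent g, Finset.mul_sum, map_sum]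
    have : ∀ i, homogeneousComponent (n+2) (JB k α β * homogeneousComponent i g)
        = if n = i then JB k α β * homogeneousComponent i g else 0 := by
      intro i
      rw [homogeneousComponent_of_mem (n := 2 + i)
        ((J_homB k α β).mul (homogeneousComponent_isHomogeneous i g))]
      congr 1
      apply propext; omega
    simp only [this, Finset.sum_ite_eq, Finset.mem_range]
    split_ifs with h
    · rfl
    · rw [homogeneousComponent_eq_zero _ _ (by omega), mul_zero]
  rw [homogeneousComponent_of_mem h, if_pos rfl] at key
  rw [mul_left_cancel₀ (J_neB k α β hα) key]
  exact homogeneousComponent_isHomogeneous _ _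

noncomputable def JinvB (k α β : ℕ) : invPB k α β := ⟨JB k α β, J_memB k α β⟩

lemma ideal_eqB (k α β : ℕ) : idealB k α β = Ideal.span {JinvB k α β} := by
  unfold idealB
  congr 1
  ext f
  simp only [Set.mem_ofPred_eq, Set.mem_singleton_iff, JinvB, Subtype.ext_iff]

noncomputable def RB (k α β n : ℕ) : Submodule ℂ (invPB k α β ⧸ idealB k α β) :=
  (VB k α β n).map (Ideal.Quotient.mkₐ ℂ (idealB k α β)).toLinearMap

lemma rank_auxB {K V W : Type*} [Field K] [AddCommGroup V] [Module K V] [AddCommGroup W] [Module K W]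
    (q : V →ₗ[K] W) (U₁ U₂ : Submodule K V) [FiniteDimensional K U₂] (m : U₁ →ₗ[K] U₂)
    (hinj : Function.Injective m)
    (hker : LinearMap.ker (q.domRestrict U₂) = LinearMap.range m) :
    Module.finrank K (U₂.map q) + Module.finrank K U₁ = Module.finrank K U₂ := by
  have h1 := LinearMap.finrank_range_add_finrank_ker (q.domRestrict U₂)
  rw [LinearMap.range_domRestrict, hker, LinearMap.finrank_range_of_inj hinj] at h1
  exact h1

lemma RB_finrankB (k α β : ℕ) (hα : 0 < α) (n : ℕ) :
    Module.finrank ℂ (RB k α β (n+2)) + (SB k α β n).ncard = (SB k α β (n+2)).ncard := by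
  rw [← VB_finrankB, ← VB_finrankB]
  set q := (Ideal.Quotient.mkₐ ℂ (idealB k α β)).toLinearMap with hq
  have hm : ∀ x ∈ VB k α β n, LinearMap.mulLeft ℂ (JinvB k α β) x ∈ VB k α β (n+2) := by
    intro x hx
    change (JB k α β * (x : PB k)).IsHomogeneous (n+2)
    rw [add_comm]
    exact (J_homB k α β).mul hx
  let m : VB k α β n →ₗ[ℂ] VB k α β (n+2) := (LinearMap.mulLeft ℂ (JinvB k α β)).restrict hm
  have hinj : Function.Injective m := by
    intro x y hxy
    have h2 : JB k α β * ((x : invPB k α β) : PB k) = JB k α β * ((y : invPB k α β) : PB k) :=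
      congrArg (fun z : VB k α β (n+2) => ((z : invPB k α β) : PB k)) hxy
    exact Subtype.ext (Subtype.ext (mul_left_cancel₀ (J_neB k α β hα) h2))
  have hker : LinearMap.ker (q.domRestrict (VB k α β (n+2))) = LinearMap.range m := by
    ext x
    rw [LinearMap.mem_ker, LinearMap.domRestrict_apply]
    have : q x = 0 ↔ (x : invPB k α β) ∈ idealB k α β := Ideal.Quotient.eq_zero_iff_mem
    rw [this, ideal_eqB, Ideal.mem_span_singleton']
    constructor
    · rintro ⟨a, ha⟩
      have hx : ((x : invPB k α β) : PB k).IsHomogeneous (n+2) := x.2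
      rw [← ha] at hx
      refine ⟨⟨a, div_homB k α β hα n a ?_⟩, ?_⟩
      · rw [mul_comm]; exact hx
      · apply Subtype.ext
        exact (mul_comm (JinvB k α β) a).trans ha
    · rintro ⟨y, rfl⟩
      exact ⟨y, mul_comm _ _⟩
  exact rank_auxB q (VB k α β n) (VB k α β (n+2)) m hinj hker

lemma RB_isoB (k k' α β α' β' : ℕ)
    (H : ∃ Φ : (invPB k α β ⧸ idealB k α β) ≃ₐ[ℂ] (invPB k' α' β' ⧸ idealB k' α' β'),
      ∀ d : ℕ,
        Φ '' (Ideal.Quotient.mk (idealB k α β) ''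
            {f : invPB k α β | ((f : PB k)).IsHomogeneous d})
          = Ideal.Quotient.mk (idealB k' α' β') ''
            {g : invPB k' α' β' | ((g : PB k')).IsHomogeneous d}) (d : ℕ) :
    Module.finrank ℂ (RB k α β d) = Module.finrank ℂ (RB k' α' β' d) := by
  obtain ⟨Φ, h⟩ := H
  rw [← Φ.toLinearEquiv.finrank_map_eq (RB k α β d)]
  have : (RB k α β d).map (Φ.toLinearEquiv : _ →ₗ[ℂ] _) = RB k' α' β' d := SetLike.coe_injective (h d)
  rw [this]

def BlB (k A B c e : ℕ) : Set (SgB k →₀ ℕ) :=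
  {d | d (Sum.inl (Sum.inl ())) = A ∧ d (Sum.inr (Sum.inl ())) = B ∧
    ∑ j, d (Sum.inl (Sum.inr j)) = c ∧ ∑ j, d (Sum.inr (Sum.inr j)) = e}

noncomputable def BlB_equiv (k A B c e : ℕ) :
    BlB k A B c e ≃ {P : Fin k → ℕ // ∑ i, P i = c} × {P : Fin k → ℕ // ∑ i, P i = e} where
  toFun d := (⟨fun j => d.1 (Sum.inl (Sum.inr j)), d.2.2.2.1⟩,
    ⟨fun j => d.1 (Sum.inr (Sum.inr j)), d.2.2.2.2⟩)
  invFun P := ⟨Finsupp.equivFunOnFinite.symm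
    (Sum.elim (Sum.elim (fun _ => A) P.1.1) (Sum.elim (fun _ => B) P.2.1)),
    ⟨rfl, rfl, P.1.2, P.2.2⟩⟩
  left_inv d := by
    apply Subtype.ext
    ext x
    rcases x with (x | x) | (x | x)
    · exact d.2.1.symm
    · rfl
    · exact d.2.2.1.symm
    · rfl
  right_inv P := rfl

lemma BlB_card (k A B c e : ℕ) :
    (BlB k A B c e).ncard = Nat.multichoose k c * Nat.multichoose k e := by
  have h : ∀ c, Nat.card {P : Fin k → ℕ // ∑ i, P i = c} = Nat.multichoose k c := by
    intro c
    rw [← Nat.card_congr (Sym.equivNatSumOfFintype (Fin k) c), Nat.card_eq_fintype_card,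
      Sym.card_sym_eq_multichoose, Fintype.card_fin]
  rw [← Nat.card_coe_set_eq, Nat.card_congr (BlB_equiv k A B c e), Nat.card_prod, h, h]

lemma degB (k : ℕ) (d : SgB k →₀ ℕ) : d.degree =
    d (Sum.inl (Sum.inl ())) + ∑ j, d (Sum.inl (Sum.inr j)) +
    (d (Sum.inr (Sum.inl ())) + ∑ j, d (Sum.inr (Sum.inr j))) := by
  rw [Finsupp.degree_eq_sum]
  simp [Fintype.sum_sum_type]

lemma wtB (k α β : ℕ) (d : SgB k →₀ ℕ) : ∑ x, (d x : ℤ) * wB k α β x =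
    β * (((∑ j, d (Sum.inl (Sum.inr j)) : ℕ) : ℤ) - (∑ j, d (Sum.inr (Sum.inr j)) : ℕ))
    - α * ((d (Sum.inl (Sum.inl ())) : ℤ) - d (Sum.inr (Sum.inl ()))) := by
  simp only [Fintype.sum_sum_type, wB, ← Finset.sum_mul, Finset.univ_unique, Finset.sum_singleton]
  push_cast
  rw [show (default : Unit) = () from rfl]
  ring

lemma arithB (α β : ℕ) (hβ : 0 < β) (hcop : Nat.gcd α β = 1) (x y : ℤ)
    (h : β * y - α * x = 0) : ∃ m : ℤ, x = β * m ∧ y = α * m := by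
  have hc : IsCoprime (β : ℤ) (α : ℤ) := by
    rw [Nat.isCoprime_iff_coprime]; exact Nat.Coprime.symm hcop
  obtain ⟨m, hm⟩ := hc.dvd_of_dvd_mul_left (show (β : ℤ) ∣ α * x from ⟨y, by linarith⟩)
  refine ⟨m, hm, ?_⟩
  have : (β : ℤ) ≠ 0 := by positivity
  apply mul_left_cancel₀ this
  rw [hm] at h
  linarith

def S0B (k n : ℕ) : Set (SgB k →₀ ℕ) :=
  {d | d.degree = n ∧ d (Sum.inl (Sum.inl ())) = d (Sum.inr (Sum.inl ())) ∧
    ∑ j, d (Sum.inl (Sum.inr j)) = ∑ j, d (Sum.inr (Sum.inr j))}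

lemma S0B_fin (k n : ℕ) : (S0B k n).Finite :=
  (Finsupp.finite_of_degree_eq n).subset fun _ h => h.1

lemma S0_subB (k α β n : ℕ) : S0B k n ⊆ SB k α β n := by
  rintro d ⟨h1, h2, h3⟩
  refine ⟨h1, ?_⟩
  rw [wtB, h2, h3]; ring

lemma SB_ltB (k α β n : ℕ) (hβ : 0 < β) (hcop : Nat.gcd α β = 1)
    (hn : n < α + β) : SB k α β n = S0B k n := by
  refine Set.Subset.antisymm ?_ (S0_subB k α β n)
  rintro d ⟨h1, h2⟩
  refine ⟨h1, ?_⟩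
  rw [degB] at h1
  rw [wtB] at h2
  obtain ⟨m, hm1, hm2⟩ := arithB α β hβ hcop _ _ h2
  have hm : m = 0 := by
    rcases lt_trichotomy m 0 with h | h | h
    · have e1 : (β : ℤ) * m ≤ -β := by nlinarith
      have e2 : (α : ℤ) * m ≤ -α := by nlinarith
      omega
    · exact h
    · have e1 : (β : ℤ) ≤ β * m := by nlinarith
      have e2 : (α : ℤ) ≤ α * m := by nlinarith
      omega
  subst hm
  rw [mul_zero] at hm1 hm2
  omega

lemma SB_eqB (k α β : ℕ) (hβ : 0 < β) (hcop : Nat.gcd α β = 1) :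
    SB k α β (α + β) = S0B k (α + β) ∪ (BlB k β 0 α 0 ∪ BlB k 0 β 0 α) := by
  apply Set.Subset.antisymm
  · rintro d ⟨h1, h2⟩
    have h1' := h1
    rw [degB] at h1
    rw [wtB] at h2
    obtain ⟨m, hm1, hm2⟩ := arithB α β hβ hcop _ _ h2
    rcases lt_trichotomy m 0 with h | h | h
    · right; right
      have e1 : (β : ℤ) * m ≤ -β := by nlinarith
      have e2 : (α : ℤ) * m ≤ -α := by nlinarith
      refine ⟨?_, ?_, ?_, ?_⟩ <;> omega
    · left
      subst h
      rw [mul_zero] at hm1 hm2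
      refine ⟨h1', ?_, ?_⟩ <;> omega
    · right; left
      have e1 : (β : ℤ) ≤ β * m := by nlinarith
      have e2 : (α : ℤ) ≤ α * m := by nlinarith
      refine ⟨?_, ?_, ?_, ?_⟩ <;> omega
  · refine Set.union_subset (S0_subB _ _ _ _) (Set.union_subset ?_ ?_)
    · rintro d ⟨h1, h2, h3, h4⟩
      refine ⟨?_, ?_⟩
      · rw [degB, h1, h2, h3, h4]; ring
      · rw [wtB, h1, h2, h3, h4]; push_cast; ring
    · rintro d ⟨h1, h2, h3, h4⟩
      refine ⟨?_, ?_⟩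
      · rw [degB, h1, h2, h3, h4]; ring
      · rw [wtB, h1, h2, h3, h4]; push_cast; ring

lemma SB_cardB (k α β : ℕ) (hβ : 0 < β) (hcop : Nat.gcd α β = 1) :
    (SB k α β (α + β)).ncard = (S0B k (α + β)).ncard + 2 * Nat.multichoose k α := by
  have hf := SB_finB k α β (α + β)
  rw [SB_eqB k α β hβ hcop] at hf ⊢
  rw [Set.finite_union, Set.finite_union] at hf
  rw [Set.ncard_union_eq ?_ hf.1 (hf.2.1.union hf.2.2), Set.ncard_union_eq ?_ hf.2.1 hf.2.2,
    BlB_card, BlB_card]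
  · simp; ring
  · rw [Set.disjoint_left]
    rintro d ⟨h1, h2, h3, h4⟩ ⟨h5, h6, h7, h8⟩
    omega
  · rw [Set.disjoint_left]
    rintro d ⟨h1, h2, h3⟩ (⟨h5, h6, h7, h8⟩ | ⟨h5, h6, h7, h8⟩) <;> omega

lemma S0_zeroB (k : ℕ) : (S0B k 0).ncard = 1 := by
  have : S0B k 0 = BlB k 0 0 0 0 := by
    ext d
    simp only [S0B, BlB, Set.mem_ofPred_eq, degB]
    omega
  rw [this, BlB_card]; simp

lemma S0_twoB (k : ℕ) : (S0B k 2).ncard = 1 + k * k := by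
  have : S0B k 2 = BlB k 1 1 0 0 ∪ BlB k 0 0 1 1 := by
    ext d
    simp only [S0B, BlB, Set.mem_union, Set.mem_ofPred_eq, degB]
    omega
  have hf := S0B_fin k 2
  rw [this, Set.finite_union] at hf
  rw [this, Set.ncard_union_eq ?_ hf.1 hf.2, BlB_card, BlB_card]
  · simp
  · rw [Set.disjoint_left]
    rintro d ⟨h1, h2, h3, h4⟩ ⟨h5, h6, h7, h8⟩
    omega

lemma R_twoB (k α β : ℕ) (hα : 0 < α) (hβ : 0 < β) (hcop : Nat.gcd α β = 1) :
    Module.finrank ℂ (RB k α β 2) = k * k ∨ Module.finrank ℂ (RB k α β 2) = k * k + 2 * k := by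
  have h := RB_finrankB k α β hα 0
  rw [SB_ltB k α β 0 hβ hcop (by omega), S0_zeroB, zero_add] at h
  by_cases h2 : 2 < α + β
  · rw [SB_ltB k α β 2 hβ hcop h2, S0_twoB] at h
    omega
  · have h3 := SB_cardB k α β hβ hcop
    have : α = 1 := by omega
    have : β = 1 := by omega
    subst α β
    rw [show 1 + 1 = 2 from rfl, S0_twoB, Nat.multichoose_one_right] at h3
    omega

lemma R_ltB (k α β n : ℕ) (hα : 0 < α) (hβ : 0 < β) (hcop : Nat.gcd α β = 1) (hn : n + 2 < α + β) :
    Module.finrank ℂ (RB k α β (n+2)) + (S0B k n).ncard = (S0B k (n+2)).ncard := by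
  have h := RB_finrankB k α β hα n
  rwa [SB_ltB k α β n hβ hcop (by omega), SB_ltB k α β (n+2) hβ hcop hn] at h

lemma R_eqB (k α β n : ℕ) (hα : 0 < α) (hβ : 0 < β) (hcop : Nat.gcd α β = 1) (hn : n + 2 = α + β) :
    Module.finrank ℂ (RB k α β (n+2)) + (S0B k n).ncard =
      (S0B k (n+2)).ncard + 2 * Nat.multichoose k α := by
  have h := RB_finrankB k α β hα n
  rwa [SB_ltB k α β n hβ hcop (by omega), hn, SB_cardB k α β hβ hcop, ← hn] at h

lemma mc_posB (k n : ℕ) : 0 < Nat.multichoose (k+1) n := by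
  rw [Nat.multichoose_eq]
  exact Nat.choose_pos (by omega)

lemma mc_strictB (k : ℕ) (hk : 2 ≤ k) : StrictMono (Nat.multichoose k) := by
  obtain ⟨k, rfl⟩ := Nat.exists_eq_add_of_le' hk
  apply strictMono_nat_of_lt_succ
  intro n
  have h1 := Nat.multichoose_succ_succ (k+1) n
  rw [show k + 1 + 1 = k + 2 from rfl] at h1
  have := mc_posB k (n+1)
  omega

lemma not_ltB (k α β α' β' : ℕ) (hk : 2 ≤ k) (hα : 0 < α) (hβ : 0 < β) (hα' : 0 < α') (hβ' : 0 < β')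
    (hcop : Nat.gcd α β = 1) (hcop' : Nat.gcd α' β' = 1)
    (h : ∀ d, Module.finrank ℂ (RB k α β d) = Module.finrank ℂ (RB k α' β' d)) :
    ¬ α + β < α' + β' := by
  intro hlt
  obtain ⟨n, hn⟩ := Nat.exists_eq_add_of_le' (show 2 ≤ α + β by omega)
  have h1 := R_eqB k α β n hα hβ hcop hn.symm
  have h2 := R_ltB k α' β' n hα' hβ' hcop' (by omega)
  have h3 := h (n+2)
  obtain ⟨k, rfl⟩ := Nat.exists_eq_add_of_le' hk
  have : 0 < Nat.multichoose (k+2) α := mc_posB (k+1) α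
  omega

lemma k_eqB (k k' : ℕ) (hk' : 1 ≤ k') (h : k * k = k' * k' + 2 * k') : False := by
  have h1 : k' < k := by nlinarith
  have h2 : k < k' + 1 := by nlinarith
  omega

/-- for `k ≥ 2`, if the graded algebras of regular functions of the
`ℂ^×`-symplectic quotients of `(-α, β, …, β)` (`k` copies) and `(-α', β', …, β')`
(`k'` copies) are isomorphic as graded ℂ-algebras, then `k = k'`, `α = α'`, `β = β'`. -/
theorem stmt14 (k k' : ℕ) (hk : 2 ≤ k) (hk' : 1 ≤ k')
    (α β α' β' : ℕ) (hα : 0 < α) (hβ : 0 < β) (hα' : 0 < α') (hβ' : 0 < β')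
    (hcop : Nat.gcd α β = 1) (hcop' : Nat.gcd α' β' = 1)
    (H : ∃ Φ : (invPB k α β ⧸ idealB k α β) ≃ₐ[ℂ] (invPB k' α' β' ⧸ idealB k' α' β'),
      ∀ d : ℕ,
        Φ '' (Ideal.Quotient.mk (idealB k α β) ''
            {f : invPB k α β | ((f : PB k)).IsHomogeneous d})
          = Ideal.Quotient.mk (idealB k' α' β') ''
            {g : invPB k' α' β' | ((g : PB k')).IsHomogeneous d}) :
    k = k' ∧ α = α' ∧ β = β' := by
  have hR := RB_isoB k k' α β α' β' H
  have hkk : k = k' := by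
    have h2 := hR 2
    rcases R_twoB k α β hα hβ hcop with h | h <;> rcases R_twoB k' α' β' hα' hβ' hcop' with h' | h'
    · nlinarith
    · exact (k_eqB k k' hk' (by omega)).elim
    · exact (k_eqB k' k (by omega) (by omega)).elim
    · nlinarith
  subst hkk
  have hs : α + β = α' + β' := by
    have h1 := not_ltB k α β α' β' hk hα hβ hα' hβ' hcop hcop' hR
    have h2 := not_ltB k α' β' α β hk hα' hβ' hα hβ hcop' hcop (fun d => (hR d).symm)
    omega
  have ha : α = α' := by
    obtain ⟨n, hn⟩ := Nat.exists_eq_add_of_le' (show 2 ≤ α + β by omega)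
    have h1 := R_eqB k α β n hα hβ hcop hn.symm
    have h2 := R_eqB k α' β' n hα' hβ' hcop' (by omega)
    have h3 := hR (n+2)
    exact (mc_strictB k hk).injective (by omega)
  exact ⟨rfl, ha, by omega⟩
end
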